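/- For any number of actions N ≥ 2 and any horizon T ≥ 1, and for any (possibly randomized) bandit policy — i.e., any sequence of maps that, given the history of previously chosen arms and observed rewards, outputs a probability distribution over the N arms from which the next arm I_t is drawn — there exists an assignment of reward distributions (Bernoulli distributions with mean vector μ ∈ [0,1]^N, rewards drawn independently across rounds) such that the expected regret satisfies E[R_T] = T·max_{i∈[N]} μ_i − E[Σ_{t=1}^T μ_{I_t}] ≥ (1/20)·min{√(NT), T}. -/

import Mathlib

/-- Expected sum of mean rewards collected by a (possibly randomized) bandit policy
`π` over the next `t` rounds, given the history `h` of previously chosen arms and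
observed Bernoulli rewards.  `π h i` is the probability that the policy pulls arm `i`
after history `h`; when arm `i` (with Bernoulli mean `μ i`) is pulled, the reward is
`true` with probability `μ i` and `false` with probability `1 − μ i`, independently
across rounds. -/
noncomputable def banditExpectedMeanSum (N : ℕ)
    (π : List (Fin N × Bool) → Fin N → ℝ) (μ : Fin N → ℝ) :
    ℕ → List (Fin N × Bool) → ℝ
  | 0, _ => 0
  | t + 1, h =>
      ∑ i : Fin N, π h i *
        (μ i + μ i * banditExpectedMeanSum N π μ t (h ++ [(i, true)])
          + (1 - μ i) * banditExpectedMeanSum N π μ t (h ++ [(i, false)]))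

/-- Expectation of a function of the final history. -/
noncomputable def histE (N : ℕ) (π : List (Fin N × Bool) → Fin N → ℝ) (μ : Fin N → ℝ)
    (F : List (Fin N × Bool) → ℝ) : ℕ → List (Fin N × Bool) → ℝ
  | 0, h => F h
  | t + 1, h =>
      ∑ i : Fin N, π h i * (μ i * histE N π μ F t (h ++ [(i, true)])
          + (1 - μ i) * histE N π μ F t (h ++ [(i, false)]))

/-- Number of pulls of arm `i`. -/
def pulls {N : ℕ} (i : Fin N) (h : List (Fin N × Bool)) : ℕ := (h.map Prod.fst).count i

lemma pulls_append {N : ℕ} (i j : Fin N) (b : Bool) (h : List (Fin N × Bool)) :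
    (pulls i (h ++ [(j, b)]) : ℝ) = pulls i h + (if j = i then 1 else 0) := by
  unfold pulls
  by_cases hj : j = i <;> simp [List.count_append, hj]

lemma pulls_le {N : ℕ} (i : Fin N) (h : List (Fin N × Bool)) : pulls i h ≤ h.length := by
  unfold pulls
  simpa using List.count_le_length (l := h.map Prod.fst) (a := i)

lemma histE_mono {N : ℕ} {π : List (Fin N × Bool) → Fin N → ℝ} {μ : Fin N → ℝ}
    (hπ0 : ∀ h i, 0 ≤ π h i) (hμ : ∀ i, μ i ∈ Set.Icc (0 : ℝ) 1)
    {F G : List (Fin N × Bool) → ℝ} (t : ℕ) :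
    ∀ h, (∀ h', h'.length = h.length + t → F h' ≤ G h') →
      histE N π μ F t h ≤ histE N π μ G t h := by
  induction t with
  | zero => intro h H; exact H h (by simp)
  | succ t ih =>
    intro h H
    simp only [histE]
    refine Finset.sum_le_sum fun i _ => mul_le_mul_of_nonneg_left ?_ (hπ0 h i)
    have key : ∀ b, histE N π μ F t (h ++ [(i, b)]) ≤ histE N π μ G t (h ++ [(i, b)]) := by
      intro b
      refine ih _ fun h' hh => H h' ?_
      simp at hh; omega
    exact add_le_add (mul_le_mul_of_nonneg_left (key _) (hμ i).1)
      (mul_le_mul_of_nonneg_left (key _) (by linarith [(hμ i).2]))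

lemma histE_affine {N : ℕ} {π : List (Fin N × Bool) → Fin N → ℝ} {μ : Fin N → ℝ}
    (hπ1 : ∀ h, ∑ i, π h i = 1) (F : List (Fin N × Bool) → ℝ) (a b : ℝ) (t : ℕ) :
    ∀ h, histE N π μ (fun h => a + b * F h) t h = a + b * histE N π μ F t h := by
  induction t with
  | zero => intro h; rfl
  | succ t ih =>
    intro h
    simp only [histE, ih]
    calc _ = ∑ i, (a * π h i + b * (π h i * (μ i * histE N π μ F t (h ++ [(i, true)])
          + (1 - μ i) * histE N π μ F t (h ++ [(i, false)])))) := by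
            refine Finset.sum_congr rfl fun i _ => by ring
      _ = _ := by rw [Finset.sum_add_distrib, ← Finset.mul_sum, ← Finset.mul_sum, hπ1, mul_one]

lemma histE_sum_pulls {N : ℕ} {π : List (Fin N × Bool) → Fin N → ℝ} {μ : Fin N → ℝ}
    (hπ1 : ∀ h, ∑ i, π h i = 1) (t : ℕ) :
    ∀ h, ∑ i, histE N π μ (fun h => (pulls i h : ℝ)) t h = h.length + t := by
  induction t with
  | zero =>
    intro h
    simp only [histE]
    induction h using List.reverseRecOn with
    | nil => simp [pulls]
    | append_singleton h x ih =>
      obtain ⟨j, b⟩ := x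
      simp only [pulls_append, Finset.sum_add_distrib]
      simp at ih
      simp [ih]
  | succ t ih =>
    intro h
    simp only [histE]
    rw [Finset.sum_comm]
    calc _ = ∑ j, π h j * ((h.length : ℝ) + (t + 1)) := by
            refine Finset.sum_congr rfl fun j _ => ?_
            rw [← Finset.mul_sum, Finset.sum_add_distrib, ← Finset.mul_sum, ← Finset.mul_sum,
              ih, ih]
            simp
            ring_nf
            simp
      _ = _ := by rw [← Finset.sum_mul, hπ1]; push_cast; ring

/-- Means of the hard instance in which arm `i` is better by `e`. -/
noncomputable def hardMean {N : ℕ} (i : Fin N) (e : ℝ) : Fin N → ℝ :=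
  fun j => 1 / 2 + e * (if j = i then 1 else 0)

lemma bandit_eq {N : ℕ} {π : List (Fin N × Bool) → Fin N → ℝ}
    (hπ1 : ∀ h, ∑ i, π h i = 1) (i : Fin N) (e : ℝ) (t : ℕ) :
    ∀ h, banditExpectedMeanSum N π (hardMean i e) t h =
      t / 2 + e * (histE N π (hardMean i e) (fun h => (pulls i h : ℝ)) t h - pulls i h) := by
  induction t with
  | zero => intro h; simp [histE, banditExpectedMeanSum]
  | succ t ih =>
    intro h
    simp only [histE, banditExpectedMeanSum, ih, pulls_append]
    calc _ = ∑ j, (((t + 1) / 2 - e * pulls i h) * π h j + e * (π h j * (hardMean i e j * histE N π (hardMean i e) (fun h => (pulls i h : ℝ)) t (h ++ [(j, true)])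
          + (1 - hardMean i e j) * histE N π (hardMean i e) (fun h => (pulls i h : ℝ)) t (h ++ [(j, false)])))) := by
            refine Finset.sum_congr rfl fun j _ => ?_
            have : hardMean i e j = 1 / 2 + e * (if j = i then 1 else 0) := rfl
            generalize (if j = i then (1:ℝ) else 0) = z at *
            generalize histE N π (hardMean i e) (fun h => (pulls i h : ℝ)) t (h ++ [(j, true)]) = A
            generalize histE N π (hardMean i e) (fun h => (pulls i h : ℝ)) t (h ++ [(j, false)]) = B
            rw [this]; ring
      _ = _ := by
        rw [Finset.sum_add_distrib, ← Finset.mul_sum, ← Finset.mul_sum, hπ1]; push_cast; ring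

/-- Linearised Donsker-Varadhan inequality along the interaction. -/
lemma dv {N : ℕ} {π : List (Fin N × Bool) → Fin N → ℝ}
    (hπ0 : ∀ h i, 0 ≤ π h i) (hπ1 : ∀ h, ∑ i, π h i = 1) (i : Fin N) (e κ : ℝ)
    (he0 : 0 ≤ e) (he1 : e ≤ 1 / 4)
    (hκ : - (Real.log (1 + 2 * e) + Real.log (1 - 2 * e)) / 2 ≤ κ)
    (F : List (Fin N × Bool) → ℝ) (t : ℕ) :
    ∀ h c, 0 < c → histE N π (fun _ => 1 / 2) F t h ≤
      κ * (histE N π (fun _ => 1 / 2) (fun h => (pulls i h : ℝ)) t h - pulls i h)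
      + c * histE N π (hardMean i e) (fun h => Real.exp (F h)) t h - 1 - Real.log c := by
  induction t with
  | zero =>
    intro h c hc
    simp only [histE]
    have h1 := Real.add_one_le_exp (F h + Real.log c)
    rw [Real.exp_add, Real.exp_log hc] at h1
    linarith
  | succ t ih =>
    intro h c hc
    simp only [histE]
    have step : ∀ j, π h j * (1 / 2 * histE N π (fun _ => 1 / 2) F t (h ++ [(j, true)])
          + (1 - 1 / 2) * histE N π (fun _ => 1 / 2) F t (h ++ [(j, false)])) ≤
        (- κ * pulls i h - 1 - Real.log c) * π h j + κ * (π h j * (1 / 2 * histE N π (fun _ => 1 / 2) (fun h => (pulls i h : ℝ)) t (h ++ [(j, true)])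
          + (1 - 1 / 2) * histE N π (fun _ => 1 / 2) (fun h => (pulls i h : ℝ)) t (h ++ [(j, false)])))
        + c * (π h j * (hardMean i e j * histE N π (hardMean i e) (fun h => Real.exp (F h)) t (h ++ [(j, true)])
          + (1 - hardMean i e j) * histE N π (hardMean i e) (fun h => Real.exp (F h)) t (h ++ [(j, false)]))) := by
      intro j
      by_cases hj : j = i
      · have a1 := ih (h ++ [(j, true)]) (c * (1 + 2 * e)) (by positivity)
        have a2 := ih (h ++ [(j, false)]) (c * (1 - 2 * e)) (mul_pos hc (by linarith))
        rw [Real.log_mul hc.ne' (by linarith), pulls_append] at a1 a2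
        have hm : hardMean i e j = 1 / 2 + e := by simp [hardMean, hj]
        rw [hm]
        simp only [hj, if_true] at a1 a2 ⊢
        have := mul_le_mul_of_nonneg_left (add_le_add a1 a2) (hπ0 h i)
        have h3 := mul_le_mul_of_nonneg_left hκ (hπ0 h i)
        linarith
      · have a1 := ih (h ++ [(j, true)]) c hc
        have a2 := ih (h ++ [(j, false)]) c hc
        rw [pulls_append] at a1 a2
        have hm : hardMean i e j = 1 / 2 := by simp [hardMean, hj]
        rw [hm]
        simp only [hj, if_false] at a1 a2 ⊢
        have := mul_le_mul_of_nonneg_left (add_le_add a1 a2) (hπ0 h j)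
        linarith
    refine (Finset.sum_le_sum fun j _ => step j).trans (le_of_eq ?_)
    rw [Finset.sum_add_distrib, Finset.sum_add_distrib, ← Finset.mul_sum, ← Finset.mul_sum,
      ← Finset.mul_sum, hπ1]
    ring

lemma exp_chord (u : ℝ) (h0 : 0 ≤ u) (h1 : u ≤ 1) :
    Real.exp (0 + -(2 * Real.log 2) * u) ≤ 1 + -(3 / 4) * u := by
  have := convexOn_exp.2 (Set.mem_univ (0:ℝ)) (Set.mem_univ (-(2 * Real.log 2)))
    (show 0 ≤ 1 - u by linarith) h0 (by ring)
  have h4 : Real.exp (-(2 * Real.log 2)) = 1 / 4 := by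
    rw [Real.exp_neg, two_mul, Real.exp_add, Real.exp_log (by norm_num)]; norm_num
  simp only [smul_eq_mul, h4, Real.exp_zero] at this
  calc _ = Real.exp ((1 - u) * 0 + u * -(2 * Real.log 2)) := by congr 1; ring
    _ ≤ _ := this
    _ = _ := by ring

lemma kappa_bound (e : ℝ) (he0 : 0 ≤ e) (he1 : e ≤ 1 / 4) :
    - (Real.log (1 + 2 * e) + Real.log (1 - 2 * e)) / 2 ≤ 8 / 3 * e ^ 2 := by
  rw [← Real.log_mul (by linarith) (by linarith)]
  have hp : 0 < (1 + 2 * e) * (1 - 2 * e) := mul_pos (by linarith) (by linarith)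
  have h1 := Real.one_sub_inv_le_log_of_pos hp
  have h2 : ((1 + 2 * e) * (1 - 2 * e))⁻¹ ≤ 1 + 16 / 3 * e ^ 2 := by
    rw [inv_le_iff_one_le_mul₀ hp]
    have : e ^ 2 ≤ 1 / 16 := by nlinarith
    nlinarith [mul_nonneg (sq_nonneg e) (sub_nonneg.2 this)]
  linarith

/-- **Multi-armed bandit minimax lower bound (Auer et al.).**
For any number of actions `N ≥ 2`, any horizon `T ≥ 1`, and any randomized bandit policy
(a map from histories to probability distributions over the arms), there exists an
assignment of Bernoulli reward distributions with means `μ ∈ [0,1]^N` such that the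
expected regret `T·max_i μ_i − E[Σ_{t=1}^T μ_{I_t}]` is at least `(1/20)·min{√(NT), T}`. -/
theorem bandit_minimax_lower_bound (N T : ℕ) (hN : 2 ≤ N) (hT : 1 ≤ T)
    (π : List (Fin N × Bool) → Fin N → ℝ)
    (hπ0 : ∀ h i, 0 ≤ π h i) (hπ1 : ∀ h, ∑ i, π h i = 1) :
    ∃ μ : Fin N → ℝ, (∀ i, μ i ∈ Set.Icc (0 : ℝ) 1) ∧
      (1 / 20) * min (Real.sqrt (N * T)) (T : ℝ) ≤
        (T : ℝ) * (⨆ i, μ i) - banditExpectedMeanSum N π μ T [] := by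
  have hT0 : (0 : ℝ) < T := by exact_mod_cast hT
  have hN2 : (2 : ℝ) ≤ N := by exact_mod_cast hN
  set m := min (Real.sqrt (N * T)) (T : ℝ) with hm
  have hm0 : 0 ≤ m := le_min (Real.sqrt_nonneg _) hT0.le
  have hmT : m ≤ T := min_le_right _ _
  have hm2 : m ^ 2 ≤ N * T := by
    have h1 : m ≤ Real.sqrt (N * T) := min_le_left _ _
    calc m ^ 2 ≤ Real.sqrt (N * T) ^ 2 := by gcongr
      _ = (N : ℝ) * T := Real.sq_sqrt (by positivity)
  set e := m / (4 * T) with he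
  have he0 : 0 ≤ e := by positivity
  have heT : e * T = m / 4 := by rw [he]; field_simp
  have he1 : e ≤ 1 / 4 := by
    rw [he, div_le_iff₀ (by positivity)]; linarith
  have heN : 8 / 3 * e ^ 2 * T ≤ N / 6 := by
    have : e ^ 2 * T * T ≤ N / 16 * T := by
      calc e ^ 2 * T * T = (e * T) ^ 2 := by ring
        _ = m ^ 2 / 16 := by rw [heT]; ring
        _ ≤ _ := by linarith
    have := le_of_mul_le_mul_right this hT0
    linarith
  have hμ : ∀ i : Fin N, ∀ j, hardMean i e j ∈ Set.Icc (0 : ℝ) 1 := by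
    intro i j
    unfold hardMean
    split_ifs <;> constructor <;> linarith
  have hex : ∃ i : Fin N,
      histE N π (hardMean i e) (fun h => (pulls i h : ℝ)) T [] ≤ 7 / 9 * T := by
    by_contra! hcon
    have hi : ∀ i : Fin N, -(2 * Real.log 2) / T * histE N π (fun _ => 1 / 2) (fun h => (pulls i h : ℝ)) T []
        < 8 / 3 * e ^ 2 * histE N π (fun _ => 1 / 2) (fun h => (pulls i h : ℝ)) T []
          + (- 1 / 6 - Real.log 2) := by
      intro i
      have h1 := dv hπ0 hπ1 i e _ he0 he1 (kappa_bound e he0 he1)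
        (fun h => 0 + -(2 * Real.log 2) / T * (pulls i h : ℝ)) T [] 2 (by norm_num)
      rw [histE_affine hπ1] at h1
      have h2 : histE N π (hardMean i e)
          (fun h => Real.exp (0 + -(2 * Real.log 2) / T * (pulls i h : ℝ))) T [] ≤
          histE N π (hardMean i e) (fun h => 1 + -(3 / 4) / T * (pulls i h : ℝ)) T [] := by
        refine histE_mono hπ0 (hμ i) T [] fun h' hh => ?_
        have hl : (pulls i h' : ℝ) ≤ T := by
          have := pulls_le i h'
          simp at hh
          rw [hh] at this
          exact_mod_cast this
        have := exp_chord ((pulls i h' : ℝ) / T) (by positivity) (by rw [div_le_one hT0]; exact hl)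
        convert this using 2 <;> ring_nf
      rw [histE_affine hπ1] at h2
      have h3 : 7 / 9 < histE N π (hardMean i e) (fun h => (pulls i h : ℝ)) T [] / T := by
        rw [lt_div_iff₀ hT0]; exact hcon i
      have h4 : -(3 / 4) / T * histE N π (hardMean i e) (fun h => (pulls i h : ℝ)) T []
        = -(3 / 4) * (histE N π (hardMean i e) (fun h => (pulls i h : ℝ)) T [] / T) := by ring
      rw [h4] at h2
      have h5 : (pulls i ([] : List (Fin N × Bool)) : ℝ) = 0 := by simp [pulls]
      rw [h5] at h1
      linarith
    have hne : (Finset.univ : Finset (Fin N)).Nonempty := ⟨⟨0, by omega⟩, Finset.mem_univ _⟩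
    have hs := Finset.sum_lt_sum_of_nonempty hne (fun i _ => hi i)
    rw [Finset.sum_add_distrib, ← Finset.mul_sum, ← Finset.mul_sum, histE_sum_pulls hπ1] at hs
    simp only [Finset.sum_const, Finset.card_univ, Fintype.card_fin, nsmul_eq_mul,
      List.length_nil, Nat.cast_zero, zero_add] at hs
    rw [div_mul_cancel₀ _ hT0.ne'] at hs
    nlinarith [Real.log_pos (by norm_num : (1:ℝ) < 2)]
  obtain ⟨i, hi⟩ := hex
  refine ⟨hardMean i e, hμ i, ?_⟩
  rw [bandit_eq hπ1]
  have h5 : (pulls i ([] : List (Fin N × Bool)) : ℝ) = 0 := by simp [pulls]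
  have hsup : 1 / 2 + e ≤ ⨆ j, hardMean i e j := by
    have := le_ciSup (Set.finite_range (hardMean i e)).bddAbove i
    have h8 : hardMean i e i = 1 / 2 + e := by simp [hardMean]
    rw [h8] at this
    exact this
  have h6 := mul_le_mul_of_nonneg_left hsup hT0.le
  have h7 := mul_le_mul_of_nonneg_left hi he0
  rw [h5]
  nlinarith
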